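/- The ideal $\mathcal{J}_n \subset \mathbb{C}[x_1,\ldots,x_n,y_1,\ldots,y_n] \otimes \Lambda[\theta_1,\ldots,\theta_n]$ generated by diagonal-$S_n$-antisymmetric elements is generated, as a module over $\mathbb{C}[\mathbf{x},\mathbf{y}]$, by the elements $\mathrm{Alt}\big(g(x_{k+1},\ldots,x_n,\,y_{k+1},\ldots,y_n)\,\theta_1\cdots\theta_k\big)$, ranging over $0 \le k \le n$ and over polynomials $g$ in $2(n-k)$ variables that are antisymmetric for the diagonal $S_{n-k}$-action. -/

import Mathlib

open MvPolynomial

/-- `ℂ[x₁,…,x_m,y₁,…,y_m]`: `X (inl i) = xᵢ`, `X (inr i) = yᵢ`. -/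
abbrev PP (m : ℕ) : Type := MvPolynomial (Fin m ⊕ Fin m) ℂ

/-- The super-polynomial ring `B = ℂ[x,y] ⊗ Λ[θ₁,…,θ_n]`. -/
abbrev SP (n : ℕ) : Type := TensorProduct ℂ (PP n) (ExteriorAlgebra ℂ (Fin n → ℂ))

/-- The odd variable `θᵢ ∈ B`. -/
noncomputable def θv {n : ℕ} (i : Fin n) : SP n :=
  TensorProduct.tmul ℂ 1 (ExteriorAlgebra.ι ℂ (Pi.single i (1 : ℂ)))

/-- The diagonal action of `σ ∈ S_n` on the super-polynomial ring. -/
noncomputable def diagAct {n : ℕ} (σ : Equiv.Perm (Fin n)) : SP n →ₐ[ℂ] SP n :=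
  Algebra.TensorProduct.map
    (rename (Sum.map σ σ))
    (ExteriorAlgebra.map (LinearMap.funLeft ℂ ℂ ⇑σ⁻¹))

/-- Antisymmetry for the diagonal `S_n`-action on `B`. -/
def IsAntisym {n : ℕ} (g : SP n) : Prop :=
  ∀ σ : Equiv.Perm (Fin n), diagAct σ g = ((Equiv.Perm.sign σ : ℤ) : ℂ) • g

/-- Antisymmetry of a polynomial in `2m` variables for the diagonal `S_m`-action. -/
def IsAntisymP {m : ℕ} (p : PP m) : Prop :=
  ∀ σ : Equiv.Perm (Fin m),
    rename (Sum.map σ σ) p = ((Equiv.Perm.sign σ : ℤ) : ℂ) • p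

/-- Antisymmetrization with respect to the diagonal `S_n`-action:
`Alt(f) = ∑_σ sgn(σ) σ(f)`. -/
noncomputable def Alt {n : ℕ} (f : SP n) : SP n :=
  ∑ σ : Equiv.Perm (Fin n), ((Equiv.Perm.sign σ : ℤ) : ℂ) • diagAct σ f

/-- The ordered product `θ₁ θ₂ ⋯ θ_k`. -/
noncomputable def θprod (n k : ℕ) (hk : k ≤ n) : SP n :=
  (List.ofFn fun l : Fin k => θv (Fin.castLE hk l)).prod

/-- The inclusion `{1,…,n-k} ↪ {k+1,…,n}`. -/
def emb (n k : ℕ) (hk : k ≤ n) (l : Fin (n - k)) : Fin n :=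
  ⟨k + (l : ℕ), by omega⟩

/-- The generator `Alt(g(x_{k+1},…,x_n, y_{k+1},…,y_n) θ₁⋯θ_k)` of `𝒥_n`
associated to `0 ≤ k ≤ n` and an `S_{n-k}`-antisymmetric polynomial `g`. -/
noncomputable def altGen (n k : ℕ) (hk : k ≤ n) (g : PP (n - k)) : SP n :=
  Alt ((Algebra.TensorProduct.includeLeft (S := ℂ)
        (rename (Sum.map (emb n k hk) (emb n k hk)) g)) * θprod n k hk)


namespace AntisymProof

open TensorProduct

noncomputable def Θe {n k : ℕ} (v : Fin k → Fin n) : ExteriorAlgebra ℂ (Fin n → ℂ) :=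
  ExteriorAlgebra.ιMulti ℂ k (fun l => (Pi.single (v l) (1 : ℂ) : Fin n → ℂ))

noncomputable def Θ {n k : ℕ} (v : Fin k → Fin n) : SP n := (1 : PP n) ⊗ₜ[ℂ] Θe v

noncomputable abbrev ren {n m : ℕ} (σ : Fin n → Fin m) (q : PP n) : PP m :=
  rename (Sum.map σ σ) q

noncomputable abbrev sg {n : ℕ} (σ : Equiv.Perm (Fin n)) : ℂ := ((Equiv.Perm.sign σ : ℤ) : ℂ)

lemma sg_mul {n : ℕ} (σ τ : Equiv.Perm (Fin n)) : sg (σ * τ) = sg σ * sg τ := by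
  simp [sg]

lemma sg_sq {n : ℕ} (σ : Equiv.Perm (Fin n)) : sg σ * sg σ = 1 := by
  rcases Int.units_eq_one_or (Equiv.Perm.sign σ) with h | h <;> simp [sg, h]

lemma ren_ren {n m l : ℕ} (f : Fin n → Fin m) (g : Fin m → Fin l) (q : PP n) :
    ren g (ren f q) = ren (g ∘ f) q := by
  simp [ren, rename_rename, Sum.map_comp_map]

lemma smul_tmul_eq {n : ℕ} (q : PP n) (w : ExteriorAlgebra ℂ (Fin n → ℂ)) :
    q • ((1 : PP n) ⊗ₜ[ℂ] w : SP n) = q ⊗ₜ[ℂ] w := by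
  rw [TensorProduct.smul_tmul']; simp

lemma smul_eq_mul' {n : ℕ} (q : PP n) (f : SP n) :
    q • f = (q ⊗ₜ[ℂ] (1 : ExteriorAlgebra ℂ (Fin n → ℂ)) : SP n) * f := by
  induction f using TensorProduct.induction_on with
  | zero => simp
  | add x y hx hy => simp only [smul_add, mul_add, hx, hy]
  | tmul a w =>
    rw [TensorProduct.smul_tmul', Algebra.TensorProduct.tmul_mul_tmul, one_mul]
    rfl

lemma cneg_smul {n : ℕ} (c : ℂ) (f : SP n) : (-c) • f = -(c • f) := by
  apply eq_neg_of_add_eq_zero_left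
  rw [← add_smul, neg_add_cancel, zero_smul]

lemma csmul_neg {n : ℕ} (c : ℂ) (f : SP n) : c • (-f) = -(c • f) := by
  apply eq_neg_of_add_eq_zero_left
  rw [← smul_add, neg_add_cancel, smul_zero]

lemma pneg_smul {n : ℕ} (c : PP n) (f : SP n) : (-c) • f = -(c • f) := by
  apply eq_neg_of_add_eq_zero_left
  rw [← add_smul, neg_add_cancel, zero_smul]

lemma psmul_neg {n : ℕ} (c : PP n) (f : SP n) : c • (-f) = -(c • f) := by
  apply eq_neg_of_add_eq_zero_left
  rw [← smul_add, neg_add_cancel, smul_zero]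

lemma mul_smul' {n : ℕ} (q : PP n) (f g : SP n) : f * (q • g) = q • (f * g) := by
  rw [smul_eq_mul', smul_eq_mul', ← mul_assoc, ← mul_assoc]
  congr 1
  induction f using TensorProduct.induction_on with
  | zero => simp
  | add x y hx hy => simp only [add_mul, mul_add, hx, hy]
  | tmul a w =>
    simp only [Algebra.TensorProduct.tmul_mul_tmul, one_mul, mul_one, mul_comm a q]

lemma funLeft_single {n : ℕ} (σ : Equiv.Perm (Fin n)) (i : Fin n) :
    LinearMap.funLeft ℂ ℂ (⇑σ⁻¹) (Pi.single i (1 : ℂ)) = Pi.single (σ i) (1 : ℂ) := by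
  ext j
  simp only [LinearMap.funLeft_apply, Pi.single_apply]
  congr 1
  rw [eq_iff_iff, Equiv.Perm.inv_eq_iff_eq, eq_comm]

lemma map_Θe {n k : ℕ} (σ : Equiv.Perm (Fin n)) (v : Fin k → Fin n) :
    ExteriorAlgebra.map (LinearMap.funLeft ℂ ℂ ⇑σ⁻¹) (Θe v) = Θe (σ ∘ v) := by
  unfold Θe
  rw [ExteriorAlgebra.map_apply_ιMulti]
  congr 1
  ext1 l
  exact funLeft_single σ (v l)

lemma diagAct_smul {n k : ℕ} (σ : Equiv.Perm (Fin n)) (q : PP n) (v : Fin k → Fin n) :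
    diagAct σ (q • Θ v) = ren σ q • Θ (σ ∘ v) := by
  unfold Θ
  rw [smul_tmul_eq, smul_tmul_eq, diagAct, Algebra.TensorProduct.map_tmul, map_Θe]

lemma diagAct_smul' {n : ℕ} (σ : Equiv.Perm (Fin n)) (q : PP n) (f : SP n) :
    diagAct σ (q • f) = ren σ q • diagAct σ f := by
  induction f using TensorProduct.induction_on with
  | zero => simp
  | add x y hx hy => simp only [smul_add, map_add, hx, hy]
  | tmul a w =>
    rw [TensorProduct.smul_tmul', diagAct, Algebra.TensorProduct.map_tmul,
      Algebra.TensorProduct.map_tmul, TensorProduct.smul_tmul']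
    simp

lemma diagAct_mul {n : ℕ} (σ τ : Equiv.Perm (Fin n)) (f : SP n) :
    diagAct σ (diagAct τ f) = diagAct (σ * τ) f := by
  induction f using TensorProduct.induction_on with
  | zero => simp
  | add x y hx hy => simp only [map_add, hx, hy]
  | tmul a w =>
    simp only [diagAct, Algebra.TensorProduct.map_tmul]
    congr 1
    · exact ren_ren _ _ _
    · rw [← AlgHom.comp_apply, ExteriorAlgebra.map_comp_map]
      congr 2

lemma Alt_diag {n : ℕ} (τ : Equiv.Perm (Fin n)) (f : SP n) :
    Alt (diagAct τ f) = sg τ • Alt f := by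
  unfold Alt
  rw [Finset.smul_sum]
  refine Fintype.sum_equiv (Equiv.mulRight τ) _ _ fun σ => ?_
  rw [diagAct_mul, smul_smul, Equiv.coe_mulRight]
  congr 1
  change sg σ = sg τ * sg (σ * τ)
  rw [sg_mul, mul_comm (sg σ), ← mul_assoc, sg_sq, one_mul]

lemma diag_Alt {n : ℕ} (τ : Equiv.Perm (Fin n)) (f : SP n) :
    diagAct τ (Alt f) = sg τ • Alt f := by
  unfold Alt
  rw [Finset.smul_sum, map_sum]
  refine Fintype.sum_equiv (Equiv.mulLeft τ) _ _ fun σ => ?_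
  rw [map_smul, diagAct_mul, smul_smul, Equiv.coe_mulLeft]
  congr 1
  change sg σ = sg τ * sg (τ * σ)
  rw [sg_mul, ← mul_assoc, sg_sq, one_mul]

lemma Alt_add {n : ℕ} (f g : SP n) : Alt (f + g) = Alt f + Alt g := by
  simp [Alt, Finset.sum_add_distrib]

lemma Alt_zero {n : ℕ} : Alt (0 : SP n) = 0 := by simp [Alt]

lemma Alt_csmul {n : ℕ} (c : ℂ) (f : SP n) : Alt (c • f) = c • Alt f := by
  simp only [Alt, map_smul, Finset.smul_sum]
  exact Finset.sum_congr rfl fun σ _ => smul_comm _ _ _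

lemma Alt_sum {n : ℕ} {ι : Type*} (s : Finset ι) (f : ι → SP n) :
    Alt (∑ i ∈ s, f i) = ∑ i ∈ s, Alt (f i) := by
  classical
  induction s using Finset.induction_on with
  | empty => simp [Alt_zero]
  | insert a s ha ih => rw [Finset.sum_insert ha, Finset.sum_insert ha, Alt_add, ih]

lemma Alt_sym_smul {n : ℕ} (p : PP n) (hp : ∀ σ : Equiv.Perm (Fin n), ren σ p = p) (f : SP n) :
    Alt (p • f) = p • Alt f := by
  simp only [Alt, Finset.smul_sum]
  refine Finset.sum_congr rfl fun σ _ => ?_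
  rw [diagAct_smul', hp, smul_comm]

lemma Alt_of_antisym {n : ℕ} (f : SP n) (hf : IsAntisym f) :
    Alt f = (n.factorial : ℂ) • f := by
  unfold Alt
  have : ∀ σ : Equiv.Perm (Fin n), ((Equiv.Perm.sign σ : ℤ) : ℂ) • diagAct σ f = f := by
    intro σ
    rw [hf σ, smul_smul]
    change (sg σ * sg σ) • f = f
    rw [sg_sq, one_smul]
  rw [Finset.sum_congr rfl fun σ _ => this σ, Finset.sum_const, Finset.card_univ,
    Fintype.card_perm, Fintype.card_fin, ← Nat.cast_smul_eq_nsmul ℂ]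

lemma Θ_not_inj {n k : ℕ} (v : Fin k → Fin n) (hv : ¬ Function.Injective v) : Θ v = 0 := by
  unfold Θ Θe
  rw [AlternatingMap.map_eq_zero_of_not_injective, TensorProduct.tmul_zero]
  intro h
  exact hv fun a b hab => h (by simp only [hab])

lemma Θ_swap {n k : ℕ} (v : Fin k → Fin n) {a b : Fin k} (hab : a ≠ b) :
    Θ (v ∘ Equiv.swap a b) = - Θ v := by
  unfold Θ Θe
  rw [← TensorProduct.tmul_neg, ← AlternatingMap.map_swap _ _ hab]
  rfl

lemma Θ_cons {n k : ℕ} (v : Fin k → Fin n) (i : Fin n) :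
    θv i * Θ v = Θ (Fin.cons i v : Fin (k+1) → Fin n) := by
  unfold Θ Θe θv
  rw [Algebra.TensorProduct.tmul_mul_tmul, one_mul, ExteriorAlgebra.ιMulti_succ_apply]
  congr 2

lemma Θ_list {n k : ℕ} (v : Fin k → Fin n) : Θ v = (List.ofFn fun l => θv (v l)).prod := by
  induction k with
  | zero =>
    simp only [List.ofFn_zero, List.prod_nil]
    unfold Θ Θe
    rw [ExteriorAlgebra.ιMulti_zero_apply]; rfl
  | succ k ih =>
    rw [List.ofFn_succ, List.prod_cons, ← ih, Θ_cons]
    congr 1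
    exact (Fin.cons_self_tail v).symm

/-- cons versus snoc: a sign depending only on `k`. -/
lemma Θ_cons_snoc {n k : ℕ} (v : Fin k → Fin n) (i : Fin n) :
    Θ (Fin.cons i v : Fin (k+1) → Fin n)
      = ((-1 : ℂ)^k) • Θ (Fin.snoc v i : Fin (k+1) → Fin n) := by
  have h : (Fin.snoc v i : Fin (k+1) → Fin n)
      = (Fin.cons i v : Fin (k+1) → Fin n) ∘ finRotate (k+1) := by
    rw [Fin.snoc_eq_cons_rotate]; rfl
  rw [h]
  unfold Θ Θe
  have := (ExteriorAlgebra.ιMulti ℂ (k+1)).map_perm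
    (fun l => (Pi.single ((Fin.cons i v : Fin (k+1) → Fin n) l) (1 : ℂ) : Fin n → ℂ))
    (finRotate (k+1))
  change _ = (-1 : ℂ)^k • ((1 : PP n) ⊗ₜ[ℂ] (ExteriorAlgebra.ιMulti ℂ (k+1)
    ((fun l => (Pi.single ((Fin.cons i v : Fin (k+1) → Fin n) l) (1 : ℂ) : Fin n → ℂ))
      ∘ (finRotate (k+1)))) : SP n)
  rw [this, sign_finRotate, Nat.add_sub_cancel, ← TensorProduct.tmul_smul]
  congr 1
  rcases Nat.even_or_odd k with hk | hk
  · simp [hk.neg_one_pow]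
  · simp [hk.neg_one_pow]

lemma altGen_eq {n k : ℕ} (hk : k ≤ n) (g : PP (n - k)) :
    altGen n k hk g = Alt (ren (emb n k hk) g • Θ (Fin.castLE hk)) := by
  unfold altGen
  congr 1
  rw [θprod, Θ_list, smul_eq_mul']
  rfl


/-- The span of the generators. -/
noncomputable def NN (n : ℕ) : Submodule (PP n) (SP n) :=
  Submodule.span (PP n)
        {b : SP n | ∃ (k : ℕ) (hk : k ≤ n) (g : PP (n - k)),
          IsAntisymP g ∧ b = altGen n k hk g}

lemma csmul_mem {n : ℕ} (c : ℂ) {f : SP n} (hf : f ∈ NN n) : c • f ∈ NN n :=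
  Submodule.smul_of_tower_mem _ c hf

lemma csmul_mem_iff {n : ℕ} {c : ℂ} (hc : c ≠ 0) {f : SP n} (hf : c • f ∈ NN n) : f ∈ NN n := by
  have := csmul_mem c⁻¹ hf
  rwa [smul_smul, inv_mul_cancel₀ hc, one_smul] at this

noncomputable def F {n : ℕ} (k : ℕ) (hk : k ≤ n) (q : PP n) : SP n :=
  Alt (q • Θ (Fin.castLE hk))

lemma F_add {n k : ℕ} (hk : k ≤ n) (p q : PP n) : F k hk (p + q) = F k hk p + F k hk q := by
  simp [F, add_smul, Alt_add]

lemma F_csmul {n k : ℕ} (hk : k ≤ n) (c : ℂ) (q : PP n) : F k hk (c • q) = c • F k hk q := by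
  rw [F, smul_assoc, Alt_csmul]; rfl

lemma F_sum {n k : ℕ} (hk : k ≤ n) {ι : Type*} (s : Finset ι) (f : ι → PP n) :
    F k hk (∑ i ∈ s, f i) = ∑ i ∈ s, F k hk (f i) := by
  simp [F, Finset.sum_smul, Alt_sum]

lemma F_perm {n k : ℕ} (hk : k ≤ n) (τ : Equiv.Perm (Fin n)) (q : PP n) (c : ℂ)
    (hc : Θ (τ ∘ Fin.castLE hk) = c • Θ (Fin.castLE hk)) :
    c • F k hk (ren τ q) = sg τ • F k hk q := by
  have := Alt_diag τ (q • Θ (Fin.castLE hk))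
  rw [diagAct_smul, hc, smul_comm, Alt_csmul] at this
  exact this

lemma emb_inj {n k : ℕ} (hk : k ≤ n) : Function.Injective (emb n k hk) := by
  intro a b h
  simp only [emb, Fin.mk.injEq] at h
  ext; omega

noncomputable def ext' {n k : ℕ} (hk : k ≤ n) (τ : Equiv.Perm (Fin (n - k))) :
    Equiv.Perm (Fin n) :=
  τ.viaFintypeEmbedding ⟨emb n k hk, emb_inj hk⟩

lemma ext'_emb {n k : ℕ} (hk : k ≤ n) (τ : Equiv.Perm (Fin (n - k))) :
    ext' hk τ ∘ emb n k hk = emb n k hk ∘ τ := by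
  ext1 a
  exact Equiv.Perm.viaFintypeEmbedding_apply_image τ ⟨emb n k hk, emb_inj hk⟩ a

lemma ext'_cast {n k : ℕ} (hk : k ≤ n) (τ : Equiv.Perm (Fin (n - k))) :
    ext' hk τ ∘ Fin.castLE hk = Fin.castLE hk := by
  ext1 a
  refine Equiv.Perm.viaFintypeEmbedding_apply_notMem_range τ ⟨emb n k hk, emb_inj hk⟩ ?_
  rintro ⟨b, hb⟩
  have := congrArg Fin.val hb
  simp [emb] at this
  omega

lemma sg_ext' {n k : ℕ} (hk : k ≤ n) (τ : Equiv.Perm (Fin (n - k))) :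
    sg (ext' hk τ) = sg τ := by
  simp [sg, ext', Equiv.Perm.viaFintypeEmbedding_sign]

lemma F_base {n k : ℕ} (hk : k ≤ n) (g : PP (n - k)) : F k hk (ren (emb n k hk) g) ∈ NN n := by
  have h1 : F k hk (ren (emb n k hk) (∑ τ : Equiv.Perm (Fin (n-k)), sg τ • ren τ g)) ∈ NN n := by
    refine Submodule.subset_span ⟨k, hk, _, ?_, (altGen_eq hk _).symm⟩
    intro σ
    rw [map_sum, Finset.smul_sum]
    refine Fintype.sum_equiv (Equiv.mulLeft σ) _ _ fun τ => ?_
    rw [map_smul, smul_smul, Equiv.coe_mulLeft]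
    congr 1
    · change sg τ = sg σ * sg (σ * τ)
      rw [sg_mul, ← mul_assoc, sg_sq, one_mul]
    · exact ren_ren _ _ _
  have h2 : F k hk (ren (emb n k hk) (∑ τ : Equiv.Perm (Fin (n-k)), sg τ • ren τ g))
      = ((n-k).factorial : ℂ) • F k hk (ren (emb n k hk) g) := by
    rw [ren, map_sum, F_sum]
    have : ∀ τ : Equiv.Perm (Fin (n-k)), F k hk (ren (emb n k hk) (sg τ • ren τ g))
        = F k hk (ren (emb n k hk) g) := by
      intro τ
      rw [ren, map_smul, F_csmul]
      have h := F_perm hk (ext' hk τ) (ren (emb n k hk) g) 1 (by rw [ext'_cast, one_smul])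
      rw [one_smul, ren_ren, ext'_emb, ← ren_ren, sg_ext'] at h
      change sg τ • F k hk (ren (emb n k hk) (ren τ g)) = _
      rw [h, smul_smul, sg_sq, one_smul]
    rw [Finset.sum_congr rfl fun τ _ => this τ, Finset.sum_const, Finset.card_univ,
      Fintype.card_perm, Fintype.card_fin, ← Nat.cast_smul_eq_nsmul ℂ]
  rw [h2] at h1
  exact csmul_mem_iff (by exact_mod_cast Nat.factorial_ne_zero _) h1

lemma swap_comp_cast {n k : ℕ} (hk : k ≤ n) (a b : Fin k) :
    Equiv.swap (Fin.castLE hk a) (Fin.castLE hk b) ∘ Fin.castLE hk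
      = Fin.castLE hk ∘ Equiv.swap a b := by
  ext1 c
  have hinj := Fin.castLE_injective hk
  simp only [Function.comp, Equiv.swap_apply_def, hinj.eq_iff]
  split_ifs <;> rfl

lemma F_swap {n k : ℕ} (hk : k ≤ n) (i j : Fin n) (hi : (i : ℕ) < k) (hj : (j : ℕ) < k)
    (q : PP n) : F k hk (ren (Equiv.swap i j) q) = F k hk q := by
  by_cases hij : i = j
  · subst hij; rw [Equiv.swap_self, Equiv.coe_refl, ren, Sum.map_id_id, rename_id_apply]
  obtain ⟨a, rfl⟩ : ∃ a : Fin k, i = Fin.castLE hk a := ⟨⟨i, hi⟩, rfl⟩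
  obtain ⟨b, rfl⟩ : ∃ b : Fin k, j = Fin.castLE hk b := ⟨⟨j, hj⟩, rfl⟩
  have hab : a ≠ b := fun h => hij (by rw [h])
  have h := F_perm hk (Equiv.swap (Fin.castLE hk a) (Fin.castLE hk b)) q (-1)
    (by rw [swap_comp_cast, Θ_swap _ hab, cneg_smul, one_smul])
  simp only [sg, Equiv.Perm.sign_swap hij] at h
  push_cast at h
  rw [cneg_smul, cneg_smul, one_smul, one_smul] at h
  exact neg_injective h

/-- `x_j^a y_j^b`. -/
noncomputable def mon {n : ℕ} (a b : ℕ) (j : Fin n) : PP n :=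
  monomial (Finsupp.single (Sum.inl j) a + Finsupp.single (Sum.inr j) b) 1

lemma ren_mon {n m : ℕ} (a b : ℕ) (j : Fin n) (f : Fin n → Fin m) :
    ren f (mon a b j) = mon a b (f j) := by
  simp [ren, mon, rename_monomial, Finsupp.mapDomain_add, Finsupp.mapDomain_single]

lemma F_mono {n k : ℕ} (hk : k ≤ n) (T : Finset (Fin n)) :
    ∀ s : (Fin n ⊕ Fin n) →₀ ℕ,
      (∀ i : Fin n, (i : ℕ) < k → i ∉ T → s (Sum.inl i) = 0 ∧ s (Sum.inr i) = 0) →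
      F k hk (monomial s 1) ∈ NN n := by
  classical
  induction T using Finset.induction_on with
  | empty =>
    intro s hs
    have : ∃ g : PP (n - k), ren (emb n k hk) g = monomial s 1 := by
      refine (exists_rename_eq_of_vars_subset_range (monomial s (1:ℂ))
        (Sum.map (emb n k hk) (emb n k hk))
        (Function.Injective.sumMap (emb_inj hk) (emb_inj hk)) ?_)
      rw [vars_monomial one_ne_zero]
      intro v hv
      have hv' : s v ≠ 0 := by simpa using hv
      have key : ∀ (i : Fin n) (hi : ¬ (i : ℕ) < k), emb n k hk ⟨i - k, by omega⟩ = i := by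
        intro i hi; ext; simp [emb]; omega
      rcases v with i | i
      · have hi : ¬ (i : ℕ) < k := fun h => hv' (hs i h (by simp)).1
        exact ⟨Sum.inl ⟨i - k, by omega⟩, by rw [Sum.map_inl, key i hi]⟩
      · have hi : ¬ (i : ℕ) < k := fun h => hv' (hs i h (by simp)).2
        exact ⟨Sum.inr ⟨i - k, by omega⟩, by rw [Sum.map_inr, key i hi]⟩
    obtain ⟨g, hg⟩ := this
    rw [← hg]
    exact F_base hk g
  | insert i T hiT ih =>
    intro s hs
    by_cases hik : (i : ℕ) < k
    swap
    · refine ih s fun j hj hjT => hs j hj ?_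
      rw [Finset.mem_insert, not_or]
      exact ⟨fun h => hik (h ▸ hj), hjT⟩
    set a := s (Sum.inl i) with ha
    set b := s (Sum.inr i) with hb
    set s' := (s.erase (Sum.inl i)).erase (Sum.inr i) with hs'
    have hs'i : s' (Sum.inl i) = 0 ∧ s' (Sum.inr i) = 0 := by
      simp [hs']
    have hs'T : ∀ j : Fin n, (j : ℕ) < k → j ∉ T → s' (Sum.inl j) = 0 ∧ s' (Sum.inr j) = 0 := by
      intro j hj hjT
      by_cases hji : j = i
      · rw [hji]; exact hs'i
      · have := hs j hj (by simp [hji, hjT])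
        simp [hs', Finsupp.erase_ne, hji, this.1, this.2]
    have hdec : s = Finsupp.single (Sum.inl i) a + Finsupp.single (Sum.inr i) b + s' := by
      ext v
      by_cases h1 : v = Sum.inl i
      · subst h1; simp [hs'i.1, ha]
      · by_cases h2 : v = Sum.inr i
        · subst h2; simp [hs'i.2, hb]
        · simp [hs', Finsupp.erase_ne, h1, h2, Finsupp.single_apply, Ne.symm h1, Ne.symm h2,
            eq_comm]
    have hq : ∀ j : Fin n, mon a b j * monomial s' 1
        = monomial (Finsupp.single (Sum.inl j) a + Finsupp.single (Sum.inr j) b + s') 1 := by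
      intro j; rw [mon, monomial_mul, one_mul]
    rw [hdec, ← hq]
    -- the symmetric power sum
    have hsum : F k hk (∑ j, mon a b j * monomial s' 1) ∈ NN n := by
      have : F k hk (∑ j, mon a b j * monomial s' 1)
          = (∑ j : Fin n, mon a b j) • F k hk (monomial s' 1) := by
        rw [← Finset.sum_mul, F, mul_smul, Alt_sym_smul]
        · rfl
        · intro σ
          rw [ren, map_sum]
          refine Fintype.sum_equiv σ _ _ fun j => ?_
          exact ren_mon a b j σ
      rw [this]
      exact Submodule.smul_mem _ _ (ih s' hs'T)
    rw [F_sum] at hsum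
    let G := Finset.univ.filter fun j : Fin n => (j : ℕ) < k ∧ j ∉ T
    rw [← Finset.sum_filter_add_sum_filter_not Finset.univ
      (fun j : Fin n => (j : ℕ) < k ∧ j ∉ T)] at hsum
    have hB : ∑ j ∈ Finset.univ.filter (fun j : Fin n => ¬ ((j : ℕ) < k ∧ j ∉ T)),
        F k hk (mon a b j * monomial s' 1) ∈ NN n := by
      refine Submodule.sum_mem _ fun j hj => ?_
      simp only [Finset.mem_filter, Finset.mem_univ, true_and, not_and, not_not] at hj
      rw [hq]
      refine ih _ fun l hl hlT => ?_
      have hlj : l ≠ j := by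
        rintro rfl
        exact hlT (hj hl)
      have := hs'T l hl hlT
      simp [this.1, this.2, Finsupp.single_apply, hlj.symm]
    have hA := (Submodule.add_mem_iff_left _ hB).1 hsum
    have hconst : ∀ j ∈ G, F k hk (mon a b j * monomial s' 1)
        = F k hk (mon a b i * monomial s' 1) := by
      intro j hj
      simp only [G, Finset.mem_filter, Finset.mem_univ, true_and] at hj
      rw [← F_swap hk i j hik hj.1 (mon a b i * monomial s' 1)]
      congr 1
      rw [ren, map_mul]
      congr 1
      · have := ren_mon a b i (Equiv.swap i j)
        rw [Equiv.swap_apply_left] at this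
        exact this.symm
      · have hj0 := hs'T j hj.1 hj.2
        rw [rename_monomial]
        congr 2
        conv_lhs => rw [← Finsupp.mapDomain_id (v := s')]
        refine Finsupp.mapDomain_congr fun v hv => ?_
        have hv' : s' v ≠ 0 := by simpa using hv
        rcases v with l | l
        · have h1 : l ≠ i := by rintro rfl; exact hv' hs'i.1
          have h2 : l ≠ j := by rintro rfl; exact hv' hj0.1
          simp [Equiv.swap_apply_of_ne_of_ne h1 h2]
        · have h1 : l ≠ i := by rintro rfl; exact hv' hs'i.2
          have h2 : l ≠ j := by rintro rfl; exact hv' hj0.2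
          simp [Equiv.swap_apply_of_ne_of_ne h1 h2]
    rw [Finset.sum_congr rfl hconst, Finset.sum_const, ← Nat.cast_smul_eq_nsmul ℂ] at hA
    refine csmul_mem_iff ?_ hA
    have : G.Nonempty := ⟨i, by simp [G, hik, hiT]⟩
    exact_mod_cast this.card_pos.ne'

lemma F_mem {n k : ℕ} (hk : k ≤ n) (q : PP n) : F k hk q ∈ NN n := by
  induction q using MvPolynomial.induction_on' with
  | monomial s c =>
    have : monomial s c = c • monomial s (1:ℂ) := by simp [smul_monomial]
    rw [this, F_csmul]
    exact csmul_mem c (F_mono hk Finset.univ s (by simp))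
  | add p q hp hq => rw [F_add]; exact Submodule.add_mem _ hp hq


lemma exists_perm {n k : ℕ} (hk : k ≤ n) (v : Fin k → Fin n) (hv : Function.Injective v) :
    ∃ σ : Equiv.Perm (Fin n), σ ∘ Fin.castLE hk = v := by
  classical
  let e : {x : Fin n // x ∈ Set.range (Fin.castLE hk)} ≃ {x : Fin n // x ∈ Set.range v} :=
    (Equiv.ofInjective _ (Fin.castLE_injective hk)).symm.trans (Equiv.ofInjective v hv)
  refine ⟨e.extendSubtype, ?_⟩
  ext1 a
  rw [Function.comp, Equiv.extendSubtype_apply_of_mem e _ ⟨a, rfl⟩]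
  have : (⟨Fin.castLE hk a, ⟨a, rfl⟩⟩ : {x : Fin n // x ∈ Set.range (Fin.castLE hk)})
    = Equiv.ofInjective _ (Fin.castLE_injective hk) a := rfl
  rw [this]
  simp [e]

lemma Alt_Θ_mem {n k : ℕ} (v : Fin k → Fin n) (q : PP n) : Alt (q • Θ v) ∈ NN n := by
  by_cases hv : Function.Injective v
  · have hk : k ≤ n := by simpa using Fintype.card_le_of_injective v hv
    obtain ⟨σ, rfl⟩ := exists_perm hk v hv
    have h : q • Θ (σ ∘ Fin.castLE hk) = diagAct σ (ren (σ⁻¹ : Equiv.Perm (Fin n)) q • Θ (Fin.castLE hk)) := by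
      rw [diagAct_smul, ren_ren]
      congr 1
      have : (σ ∘ (σ⁻¹ : Equiv.Perm (Fin n)) : Fin n → Fin n) = id := by ext1 x; simp
      rw [this, ren, Sum.map_id_id, rename_id_apply]
    rw [h, Alt_diag]
    exact csmul_mem _ (F_mem hk _)
  · rw [Θ_not_inj v hv, smul_zero, Alt_zero]; exact Submodule.zero_mem _

lemma span_Θe {n : ℕ} (w : ExteriorAlgebra ℂ (Fin n → ℂ)) :
    w ∈ Submodule.span ℂ {w | ∃ (k : ℕ) (v : Fin k → Fin n), w = Θe v} := by
  induction w using CliffordAlgebra.left_induction with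
  | algebraMap r =>
    rw [Algebra.algebraMap_eq_smul_one]
    refine Submodule.smul_mem _ _ (Submodule.subset_span ⟨0, Fin.elim0, ?_⟩)
    rw [Θe, ExteriorAlgebra.ιMulti_zero_apply]
  | add x y hx hy => exact Submodule.add_mem _ hx hy
  | ι_mul x m hx =>
    induction hx using Submodule.span_induction with
    | zero => simp
    | add x y _ _ hx hy => rw [mul_add]; exact Submodule.add_mem _ hx hy
    | smul c x _ hx => rw [mul_smul_comm]; exact Submodule.smul_mem _ _ hx
    | mem x hx =>
      obtain ⟨k, v, rfl⟩ := hx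
      rw [pi_eq_sum_univ' m, map_sum, Finset.sum_mul]
      refine Submodule.sum_mem _ fun i _ => ?_
      rw [map_smul, smul_mul_assoc]
      refine Submodule.smul_mem _ _ (Submodule.subset_span ⟨k+1, Fin.cons i v, ?_⟩)
      unfold Θe
      rw [ExteriorAlgebra.ιMulti_succ_apply]
      congr 2

lemma Alt_mem {n : ℕ} (f : SP n) : Alt f ∈ NN n := by
  induction f using TensorProduct.induction_on with
  | zero => rw [Alt_zero]; exact Submodule.zero_mem _
  | add x y hx hy => rw [Alt_add]; exact Submodule.add_mem _ hx hy
  | tmul q w =>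
    have hw := span_Θe w
    induction hw using Submodule.span_induction with
    | zero => rw [TensorProduct.tmul_zero, Alt_zero]; exact Submodule.zero_mem _
    | add x y _ _ hx hy => rw [TensorProduct.tmul_add, Alt_add]; exact Submodule.add_mem _ hx hy
    | smul c x _ hx => rw [TensorProduct.tmul_smul, Alt_csmul]; exact csmul_mem _ hx
    | mem x hx =>
      obtain ⟨k, v, rfl⟩ := hx
      rw [← smul_tmul_eq]
      exact Alt_Θ_mem v q

lemma antisym_mem {n : ℕ} (f : SP n) (hf : IsAntisym f) : f ∈ NN n := by
  have := Alt_mem f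
  rw [Alt_of_antisym f hf] at this
  exact csmul_mem_iff (by exact_mod_cast Nat.factorial_ne_zero _) this

/-- Reduce a sum over permutations to those with `σ κ = i`. -/
lemma sum_reduce {n : ℕ} {M : Type*} [AddCommGroup M] (T : Equiv.Perm (Fin n) → M)
    (κ i : Fin n) (S : Finset (Fin n))
    (h1 : ∀ σ l, l ∈ S → σ κ = i → T (σ * Equiv.swap l κ) = T σ)
    (h2 : ∀ σ l, l ∉ S → σ l = i → T σ = 0) :
    ∑ σ, T σ = S.card • ∑ σ with σ κ = i, T σ := by
  classical
  have e1 : ∑ σ, T σ = ∑ l, ∑ σ with σ l = i, T σ := by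
    rw [← Finset.sum_fiberwise Finset.univ (fun σ : Equiv.Perm (Fin n) => σ⁻¹ i)]
    refine Finset.sum_congr rfl fun l _ => ?_
    refine Finset.sum_congr ?_ fun _ _ => rfl
    ext σ
    simp only [Finset.mem_filter, Finset.mem_univ, true_and, Equiv.Perm.inv_eq_iff_eq]
    exact eq_comm
  rw [e1, ← Finset.sum_subset (Finset.subset_univ S), ← Finset.sum_const]
  · refine Finset.sum_congr rfl fun l hl => ?_
    symm
    refine Finset.sum_bij' (fun σ _ => σ * Equiv.swap l κ) (fun σ _ => σ * Equiv.swap l κ)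
      ?_ ?_ ?_ ?_ ?_
    · intro σ hσ
      simpa using hσ
    · intro σ hσ
      simpa using hσ
    · intro σ _; simp [mul_assoc]
    · intro σ _; simp [mul_assoc]
    · intro σ hσ
      exact (h1 σ l hl (by simpa using hσ)).symm
  · intro l _ hl
    refine Finset.sum_eq_zero fun σ hσ => h2 σ l hl (by simpa using hσ)

/-- The substitution elements lie in the span. -/
lemma E_mem {n k : ℕ} (hk : k ≤ n) (κ i : Fin n) (q : PP n) :
    ∀ r : PP n, ∑ σ : Equiv.Perm (Fin n),
      sg σ • ((ren (Function.update σ κ i) q * ren σ r) • Θ (σ ∘ Fin.castLE hk)) ∈ NN n := by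
  induction q using MvPolynomial.induction_on with
  | C c =>
    intro r
    have := F_mem hk (C c * r)
    rw [F, Alt] at this
    simp only [diagAct_smul] at this
    simpa [ren] using this
  | add p q hp hq =>
    intro r
    have := Submodule.add_mem _ (hp r) (hq r)
    rw [← Finset.sum_add_distrib] at this
    simpa only [ren, map_add, add_mul, add_smul, smul_add] using this
  | mul_X p v hp =>
    intro r
    have key : ∀ (v : Fin n ⊕ Fin n) (v' : Fin n ⊕ Fin n),
        (∀ σ : Equiv.Perm (Fin n), Sum.map (Function.update σ κ i) (Function.update σ κ i) v = v') →
        ∑ σ : Equiv.Perm (Fin n), sg σ • ((ren (Function.update σ κ i) (p * X v) * ren σ r) •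
          Θ (σ ∘ Fin.castLE hk)) ∈ NN n := by
      intro v v' hv
      have := Submodule.smul_mem (NN n) (X v') (hp r)
      rw [Finset.smul_sum] at this
      convert this using 2 with σ
      rw [smul_comm (X v' : PP n) (sg σ), smul_smul, ren, map_mul, rename_X, hv σ]
      congr 2
      ring
    have key2 : ∀ (v : Fin n ⊕ Fin n),
        (∀ σ : Equiv.Perm (Fin n), Sum.map (Function.update σ κ i) (Function.update σ κ i) v
          = Sum.map σ σ v) →
        ∑ σ : Equiv.Perm (Fin n), sg σ • ((ren (Function.update σ κ i) (p * X v) * ren σ r) •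
          Θ (σ ∘ Fin.castLE hk)) ∈ NN n := by
      intro v hv
      have := hp (X v * r)
      convert this using 2 with σ
      simp only [ren, map_mul, rename_X, hv σ]
      congr 2
      ring
    rcases v with l | l
    · by_cases hl : l = κ
      · exact key _ (Sum.inl i) fun σ => by simp [hl]
      · exact key2 _ fun σ => by simp [hl]
    · by_cases hl : l = κ
      · exact key _ (Sum.inr i) fun σ => by simp [hl]
      · exact key2 _ fun σ => by simp [hl]

lemma sg_swap {n : ℕ} {a b : Fin n} (h : a ≠ b) : sg (Equiv.swap a b) = -1 := by
  simp [sg, Equiv.Perm.sign_swap h]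

lemma swap_comp_emb {n k : ℕ} (hk : k ≤ n) (a b : Fin (n - k)) :
    Equiv.swap (emb n k hk a) (emb n k hk b) ∘ emb n k hk
      = emb n k hk ∘ Equiv.swap a b := by
  ext1 c
  have hinj := emb_inj hk
  simp only [Function.comp, Equiv.swap_apply_def, hinj.eq_iff]
  split_ifs <;> rfl

lemma ren_swap {m n : ℕ} (g : PP m) (hg : IsAntisymP g) {a b : Fin m} (hab : a ≠ b)
    (u : Fin m → Fin n) : ren (u ∘ Equiv.swap a b) g = - ren u g := by
  rw [← ren_ren]
  have := hg (Equiv.swap a b)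
  change ren (Equiv.swap a b) g = sg (Equiv.swap a b) • g at this
  rw [this, sg_swap hab, neg_one_smul, ren, map_neg]

lemma θ_mul_Alt {n k : ℕ} (hk : k ≤ n) (i : Fin n) (q : PP n) :
    θv i * Alt (q • Θ (Fin.castLE hk))
      = (-1 : ℂ)^k • ∑ σ : Equiv.Perm (Fin n), sg σ • (ren σ q •
        Θ (Fin.snoc (σ ∘ Fin.castLE hk) i : Fin (k+1) → Fin n)) := by
  rw [Alt, Finset.mul_sum, Finset.smul_sum]
  refine Finset.sum_congr rfl fun σ _ => ?_
  rw [diagAct_smul, mul_smul_comm, mul_smul', Θ_cons, Θ_cons_snoc, smul_comm _ ((-1 : ℂ)^k),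
    smul_comm _ ((-1 : ℂ)^k)]

lemma θ_mul_gen {n k : ℕ} (hk : k ≤ n) (i : Fin n) (g : PP (n - k)) (hg : IsAntisymP g) :
    θv i * altGen n k hk g ∈ NN n := by
  rw [altGen_eq, θ_mul_Alt]
  refine csmul_mem _ ?_
  rcases hk.lt_or_eq with hkn | hkn
  swap
  · refine Submodule.sum_mem _ fun σ _ => ?_
    rw [Θ_not_inj, smul_zero, smul_zero]
    · exact Submodule.zero_mem _
    · intro h
      have := Fintype.card_le_of_injective _ h
      simp at this
      omega
  set κ : Fin n := ⟨k, hkn⟩ with hκ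
  have hκe : κ = emb n k hk ⟨0, by omega⟩ := by ext; simp [emb, hκ]
  have hk1 : k + 1 ≤ n := hkn
  have hE := E_mem hk1 κ i (ren (emb n k hk) g) 1
  have hge : ∀ l : Fin n, k ≤ (l : ℕ) → ∃ l', l = emb n k hk l' := by
    intro l hl
    exact ⟨⟨l - k, by omega⟩, by ext; simp [emb]; omega⟩
  rw [sum_reduce _ κ i (Finset.univ.filter fun l : Fin n => k ≤ (l : ℕ))]
  rotate_left
  · intro σ l hl hσ
    have hl' : k ≤ (l : ℕ) := by simpa using hl
    obtain ⟨l', rfl⟩ := hge l hl'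
    by_cases hlκ : emb n k hk l' = κ
    · rw [hlκ, Equiv.swap_self]; rfl
    have hl0 : l' ≠ ⟨0, by omega⟩ := fun h => hlκ (by rw [h, hκe])
    have e1 : (σ * Equiv.swap (emb n k hk l') κ : Equiv.Perm (Fin n)) ∘ Fin.castLE hk
        = σ ∘ Fin.castLE hk := by
      ext1 a
      simp only [Function.comp, Equiv.Perm.mul_apply]
      rw [Equiv.swap_apply_of_ne_of_ne]
      · intro h; have := congrArg Fin.val h; simp [emb] at this; omega
      · intro h; have := congrArg Fin.val h; simp [hκ] at this; omega
    have e2 : ((σ * Equiv.swap (emb n k hk l') κ : Equiv.Perm (Fin n)) ∘ emb n k hk)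
        = (σ ∘ emb n k hk) ∘ Equiv.swap l' ⟨0, by omega⟩ := by
      rw [Function.comp_assoc, ← swap_comp_emb, ← hκe]; rfl
    rw [e1, ren_ren, ren_ren, e2, ren_swap g hg hl0, sg_mul, sg_swap hlκ, mul_neg_one,
      cneg_smul, pneg_smul, csmul_neg, neg_neg]
  · intro σ l hl hσ
    have hl' : (l : ℕ) < k := by simpa using hl
    rw [Θ_not_inj, smul_zero, smul_zero]
    intro h
    have := @h (Fin.castSucc ⟨l, hl'⟩) (Fin.last k) (by
      rw [Fin.snoc_castSucc, Fin.snoc_last]; exact hσ)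
    have := congrArg Fin.val this
    simp at this
    omega
  rw [sum_reduce _ κ i (Finset.univ.filter fun l : Fin n => (l : ℕ) ≤ k)] at hE
  rotate_left
  · intro σ l hl hσ
    have hl' : (l : ℕ) ≤ k := by simpa using hl
    by_cases hlκ : l = κ
    · rw [hlκ, Equiv.swap_self]; rfl
    have hlk : (l : ℕ) ≠ k := fun h => hlκ (Fin.ext h)
    have el : l = Fin.castLE hk1 ⟨l, by omega⟩ := rfl
    have eκ : κ = Fin.castLE hk1 (Fin.last k) := rfl
    have e1 : (σ * Equiv.swap l κ : Equiv.Perm (Fin n)) ∘ Fin.castLE hk1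
        = (σ ∘ Fin.castLE hk1) ∘ Equiv.swap ⟨l, by omega⟩ (Fin.last k) := by
      rw [Function.comp_assoc, ← swap_comp_cast, ← el, ← eκ]; rfl
    have e2 : Function.update (σ * Equiv.swap l κ : Equiv.Perm (Fin n)) κ i ∘ emb n k hk
        = Function.update σ κ i ∘ emb n k hk := by
      ext1 a
      simp only [Function.comp, Function.update_apply, Equiv.Perm.mul_apply]
      split_ifs with h
      · rfl
      · rw [Equiv.swap_apply_of_ne_of_ne _ h]
        intro h; have := congrArg Fin.val h; simp [emb] at this; omega
    rw [e1, ren_ren, ren_ren, e2, Θ_swap, sg_mul, sg_swap hlκ, mul_neg_one,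
      cneg_smul, psmul_neg, csmul_neg, neg_neg]
    · simp [ren]
    · intro h; exact hlk (congrArg Fin.val h)
  · intro σ l hl hσ
    have hl' : k < (l : ℕ) := by simpa using hl
    obtain ⟨l', rfl⟩ := hge l hl'.le
    have hl0 : l' ≠ ⟨0, by omega⟩ := by
      intro h; rw [h] at hl'; simp [emb] at hl'
    have : ren (Function.update σ κ i ∘ emb n k hk) g = 0 := by
      have h := ren_swap g hg hl0 (Function.update σ κ i ∘ emb n k hk)
      have e : (Function.update σ κ i ∘ emb n k hk) ∘ Equiv.swap l' ⟨0, by omega⟩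
          = Function.update σ κ i ∘ emb n k hk := by
        rw [Function.comp_assoc, ← swap_comp_emb, ← hκe]
        have hne : emb n k hk l' ≠ κ := by rw [hκe]; exact fun h => hl0 (emb_inj hk h)
        have : Function.update σ κ i ∘ Equiv.swap (emb n k hk l') κ = Function.update σ κ i := by
          ext1 a
          simp only [Function.comp, Equiv.swap_apply_def]
          split_ifs with h1 h2
          · rw [h1, Function.update_self, Function.update_of_ne hne, hσ]
          · rw [h2, Function.update_self, Function.update_of_ne hne, hσ]
          · rfl
        rw [← Function.comp_assoc, this]
      rw [e] at h
      exact self_eq_neg.1 h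
    rw [ren_ren, this, zero_mul, zero_smul, smul_zero]
  rw [← Nat.cast_smul_eq_nsmul ℂ] at hE ⊢
  refine csmul_mem _ ?_
  have hE' := csmul_mem_iff (by
    have : (Finset.univ.filter fun l : Fin n => (l : ℕ) ≤ k).Nonempty := ⟨κ, by simp [hκ]⟩
    exact_mod_cast this.card_pos.ne') hE
  convert hE' using 2 with σ hσ
  have hσ' : σ κ = i := by simpa using hσ
  have e1 : Function.update σ κ i = σ := by rw [← hσ', Function.update_eq_self]
  have e2 : (Fin.snoc (σ ∘ Fin.castLE hk) i : Fin (k+1) → Fin n) = σ ∘ Fin.castLE hk1 := by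
    ext1 a
    refine Fin.lastCases ?_ (fun a => ?_) a
    · rw [Fin.snoc_last, ← hσ']; rfl
    · rw [Fin.snoc_castSucc]; rfl
  rw [e1, e2]
  simp [ren]

lemma θ_mul_mem {n : ℕ} (i : Fin n) (b : SP n) (hb : b ∈ NN n) : θv i * b ∈ NN n := by
  unfold NN at hb
  induction hb using Submodule.span_induction with
  | zero => rw [mul_zero]; exact Submodule.zero_mem _
  | add x y _ _ hx hy => rw [mul_add]; exact Submodule.add_mem _ hx hy
  | smul c x _ hx => rw [mul_smul']; exact Submodule.smul_mem _ _ hx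
  | mem x hx =>
    obtain ⟨k, hk, g, hg, rfl⟩ := hx
    exact θ_mul_gen hk i g hg

lemma mul_mem' {n : ℕ} (f b : SP n) (hb : b ∈ NN n) : f * b ∈ NN n := by
  induction f using TensorProduct.induction_on with
  | zero => rw [zero_mul]; exact Submodule.zero_mem _
  | add x y hx hy => rw [add_mul]; exact Submodule.add_mem _ hx hy
  | tmul q w =>
    have hΘ : ∀ (k : ℕ) (v : Fin k → Fin n), Θ v * b ∈ NN n := by
      intro k
      induction k with
      | zero =>
        intro v
        rw [Θ_list]; simpa using hb
      | succ k ih =>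
        intro v
        rw [← Fin.cons_self_tail v, ← Θ_cons, mul_assoc]
        exact θ_mul_mem _ _ (ih _)
    rw [← smul_tmul_eq, smul_eq_mul', mul_assoc, ← smul_eq_mul']
    refine Submodule.smul_mem _ _ ?_
    have hw := span_Θe w
    induction hw using Submodule.span_induction with
    | zero => rw [TensorProduct.tmul_zero, zero_mul]; exact Submodule.zero_mem _
    | add x y _ _ hx hy =>
      rw [TensorProduct.tmul_add, add_mul]; exact Submodule.add_mem _ hx hy
    | smul c x _ hx => rw [TensorProduct.tmul_smul, smul_mul_assoc]; exact csmul_mem _ hx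
    | mem x hx =>
      obtain ⟨k, v, rfl⟩ := hx
      exact hΘ k v

end AntisymProof

/-- The ideal `𝒥_n` generated by the diagonal antisymmetric elements of the
super-polynomial ring is generated, as a module over `ℂ[x,y]`, by the elements
`Alt(g(x_{k+1},…,x_n, y_{k+1},…,y_n) θ₁⋯θ_k)` for `0 ≤ k ≤ n` and `g` an
antisymmetric polynomial for the diagonal `S_{n-k}`-action. -/
theorem antisym_ideal_generators (n : ℕ) :
    (Submodule.span (SP n) {g : SP n | IsAntisym g}).restrictScalars (PP n) =
      Submodule.span (PP n)
        {b : SP n | ∃ (k : ℕ) (hk : k ≤ n) (g : PP (n - k)),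
          IsAntisymP g ∧ b = altGen n k hk g} := by
  apply le_antisymm
  · intro f hf
    rw [Submodule.restrictScalars_mem] at hf
    change f ∈ AntisymProof.NN n
    induction hf using Submodule.span_induction with
    | zero => exact Submodule.zero_mem _
    | add x y _ _ hx hy => exact Submodule.add_mem _ hx hy
    | smul c x _ hx => exact AntisymProof.mul_mem' c x hx
    | mem x hx => exact AntisymProof.antisym_mem x hx
  · refine Submodule.span_le.2 ?_
    rintro _ ⟨k, hk, g, _, rfl⟩
    exact Submodule.subset_span fun σ => AntisymProof.diag_Alt σ _
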